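/- Modulus-of-continuity estimate for the rescaled Hamiltonian at Ishii matrices: let T > 0, λ > 0, and H̃(t,x,r,p,N) := −λ·r + e^{λt}·H(x, e^{−λt}·r, e^{−λt}·p, e^{−λt}·N). Then there exists a modulus of continuity ρ (depending only on d, m, T, λ, γ̄, M, K, the uniform bounds on b, σ, c, γ, and the moduli of uniform continuity of γ, c and the p_k, but not on δ) such that for every δ > 0, all t, s ∈ [0,T], all x, y ∈ ℝ^d, every r ∈ ℝ, and all symmetric d×d real matrices X, Y for which the 2d×2d block matrix with blocks (X, 0; 0, −Y) is ≼ (3/δ)·(I_d, −I_d; −I_d, I_d) (i.e. the difference is negative semidefinite), one has H̃(t, x, r, (x−y)/δ, X) − H̃(s, y, r, (x−y)/δ, Y) ≤ ρ( |t−s| + |x−y| + |x−y|²/δ )·(1 + |r|). -/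

import Mathlib

/-!
Why the estimate holds. Multiplying the infimum by `e^{λt}` cancels the rescaling in all terms
that are linear in `(r, p, N)`, so that
`H̃(t,x,r,p,N) = -λ r + inf_a { b·p + ½ tr(σσᵀN) + e^{λt} G^a(x, e^{-λt} r) - c r }`
(`HamT_eq`), and a difference of two such infima is controlled by a bound on the difference of
the integrands which is uniform in `a`. That bound is the sum of four contributions.

* Drift: `(b(x) - b(y))·(x - y)/δ ≤ d K |x - y|²/δ` by the Lipschitz bound (`drift_le`).
* Diffusion: testing the Ishii inequality with the columns of `σ(x,a)` and `σ(y,a)` and summing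
  over the columns bounds the trace difference by `3 d m K² |x - y|²/δ` (`trace_le`).
* Branching: `G^a(·,r)` is uniformly continuous because `∑ₖ |pₖ(x) - pₖ(y)|` is. The first moment
  bound `∑ k pₖ ≤ M` makes the tail `k ≥ n` at most `2M/n`, and the finitely many remaining terms
  are handled by their own moduli; optimizing over `n` yields the modulus `pgfMod`. The moment
  bound also makes `G^a(x,·)` Lipschitz, which gives the dependence on `t` a Lipschitz bound
  (`Gb_space`, `Gb_lip`, `branching_le`).
* Discount: `|c(x) - c(y)| |r|` is bounded by the modulus of `c` times `|r|`.
-/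

open scoped BigOperators
open Set Filter

noncomputable section

/-- Clamp a real number to the interval `[-1, 1]`. -/
def clamp (r : ℝ) : ℝ := max (-1) (min 1 r)

/-- Dot product on `Fin n → ℝ`. -/
def dotp {n : ℕ} (x y : Fin n → ℝ) : ℝ := ∑ i, x i * y i

/-- The clamped branching nonlinearity `G^a(x,r)`. -/
def Gb {d : ℕ} {A : Type*} (γ : (Fin d → ℝ) → A → ℝ)
    (p : ℕ → (Fin d → ℝ) → A → ℝ) (x : Fin d → ℝ) (a : A) (r : ℝ) : ℝ :=
  γ x a * ((∑' k : ℕ, p k x a * (clamp r) ^ k) - clamp r)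

/-- The Hamiltonian
`H(x,r,p,N) = inf_a { b·p + (1/2) tr(σσᵀ N) + G^a(x,r) - c(x,a) r }`. -/
def Ham {d m : ℕ} {A : Type*} (b : (Fin d → ℝ) → A → (Fin d → ℝ))
    (σ : (Fin d → ℝ) → A → (Fin d → Fin m → ℝ))
    (γ : (Fin d → ℝ) → A → ℝ) (p : ℕ → (Fin d → ℝ) → A → ℝ)
    (c : (Fin d → ℝ) → A → ℝ)
    (x : Fin d → ℝ) (r : ℝ) (q : Fin d → ℝ) (N : Fin d → Fin d → ℝ) : ℝ :=
  ⨅ a : A, (dotp (b x a) q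
      + (1 / 2) * (∑ i, ∑ j, (∑ l, σ x a i l * σ x a j l) * N j i)
      + Gb γ p x a r - c x a * r)

/-- A modulus of continuity: nondecreasing, nonnegative, tending to `0` at `0⁺`. -/
def IsModulus (ρ : ℝ → ℝ) : Prop :=
  (∀ s, 0 ≤ ρ s) ∧ Monotone ρ ∧
    Filter.Tendsto ρ (nhdsWithin 0 (Set.Ioi 0)) (nhds 0)

/-- The continuous linear map `v ↦ dotp w v` on `Fin n → ℝ`. -/
def gradCLM {n : ℕ} (w : Fin n → ℝ) : (Fin n → ℝ) →L[ℝ] ℝ :=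
  ∑ i, w i • (ContinuousLinearMap.proj i : (Fin n → ℝ) →L[ℝ] ℝ)

/-- Test function data: a candidate test function together with its time
derivative, spatial gradient and spatial Hessian. -/
structure TestData (d : ℕ) where
  φ : ℝ → (Fin d → ℝ) → ℝ
  φt : ℝ → (Fin d → ℝ) → ℝ
  Dφ : ℝ → (Fin d → ℝ) → (Fin d → ℝ)
  D2φ : ℝ → (Fin d → ℝ) → (Fin d → Fin d → ℝ)

/-- `ψ` records a function which is `C¹` in time and `C²` in space, together with
its derivatives. -/
def IsC12 {d : ℕ} (ψ : TestData d) : Prop :=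
  (∀ s y, HasDerivAt (fun τ => ψ.φ τ y) (ψ.φt s y) s) ∧
  (∀ s y, HasFDerivAt (fun z => ψ.φ s z) (gradCLM (ψ.Dφ s y)) y) ∧
  (∀ s y i, HasFDerivAt (fun z => ψ.Dφ s z i) (gradCLM (fun j => ψ.D2φ s y i j)) y) ∧
  Continuous (fun q : ℝ × (Fin d → ℝ) => ψ.φ q.1 q.2) ∧
  Continuous (fun q : ℝ × (Fin d → ℝ) => ψ.φt q.1 q.2) ∧
  Continuous (fun q : ℝ × (Fin d → ℝ) => ψ.Dφ q.1 q.2) ∧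
  Continuous (fun q : ℝ × (Fin d → ℝ) => ψ.D2φ q.1 q.2)

/-- Viscosity subsolution of `∂ₜ u + F(t, x, u, D_x u, D²_x u) = 0` on `[0,T) × ℝ^d`. -/
def IsViscSubsoln {d : ℕ} (T : ℝ)
    (F : ℝ → (Fin d → ℝ) → ℝ → (Fin d → ℝ) → (Fin d → Fin d → ℝ) → ℝ)
    (u : ℝ → (Fin d → ℝ) → ℝ) : Prop :=
  ∀ t x, 0 ≤ t → t < T → ∀ ψ : TestData d, IsC12 ψ →
    IsLocalMaxOn (fun q : ℝ × (Fin d → ℝ) => u q.1 q.2 - ψ.φ q.1 q.2)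
      (Set.Icc (0 : ℝ) T ×ˢ (Set.univ : Set (Fin d → ℝ))) (t, x) →
    u t x = ψ.φ t x →
    0 ≤ ψ.φt t x + F t x (u t x) (ψ.Dφ t x) (ψ.D2φ t x)

/-- Viscosity supersolution of `∂ₜ u + F(t, x, u, D_x u, D²_x u) = 0` on `[0,T) × ℝ^d`. -/
def IsViscSupersoln {d : ℕ} (T : ℝ)
    (F : ℝ → (Fin d → ℝ) → ℝ → (Fin d → ℝ) → (Fin d → Fin d → ℝ) → ℝ)
    (u : ℝ → (Fin d → ℝ) → ℝ) : Prop :=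
  ∀ t x, 0 ≤ t → t < T → ∀ ψ : TestData d, IsC12 ψ →
    IsLocalMinOn (fun q : ℝ × (Fin d → ℝ) => u q.1 q.2 - ψ.φ q.1 q.2)
      (Set.Icc (0 : ℝ) T ×ˢ (Set.univ : Set (Fin d → ℝ))) (t, x) →
    u t x = ψ.φ t x →
    ψ.φt t x + F t x (u t x) (ψ.Dφ t x) (ψ.D2φ t x) ≤ 0



/-- The exponentially rescaled Hamiltonian
`H̃(t,x,r,p,N) = −λ r + e^{λt} H(x, e^{−λt} r, e^{−λt} p, e^{−λt} N)`. -/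
def HamT {d m : ℕ} {A : Type*} (b : (Fin d → ℝ) → A → (Fin d → ℝ))
    (σ : (Fin d → ℝ) → A → (Fin d → Fin m → ℝ))
    (γ : (Fin d → ℝ) → A → ℝ) (p : ℕ → (Fin d → ℝ) → A → ℝ)
    (c : (Fin d → ℝ) → A → ℝ) (lam : ℝ)
    (t : ℝ) (x : Fin d → ℝ) (r : ℝ) (q : Fin d → ℝ) (N : Fin d → Fin d → ℝ) : ℝ :=
  -lam * r + Real.exp (lam * t) *
    Ham b σ γ p c x (Real.exp (-lam * t) * r)
      (fun i => Real.exp (-lam * t) * q i)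
      (fun i j => Real.exp (-lam * t) * N i j)

/-! ### Moduli of continuity -/

theorem IsModulus.add {f g : ℝ → ℝ} (hf : IsModulus f) (hg : IsModulus g) :
    IsModulus (fun h => f h + g h) :=
  ⟨fun s => add_nonneg (hf.1 s) (hg.1 s), hf.2.1.add hg.2.1, by
    simpa using hf.2.2.add hg.2.2⟩

theorem IsModulus.const_mul {f : ℝ → ℝ} (hf : IsModulus f) {C : ℝ} (hC : 0 ≤ C) :
    IsModulus (fun h => C * f h) :=
  ⟨fun s => mul_nonneg hC (hf.1 s), hf.2.1.const_mul hC, by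
    simpa using hf.2.2.const_mul C⟩

theorem isModulus_posPart : IsModulus (fun h => max h 0) :=
  ⟨fun s => le_max_right _ _, fun _ _ h => max_le_max_right _ h, by
    have : Tendsto (fun h : ℝ => max h 0) (nhds 0) (nhds (max 0 0)) :=
      (continuous_id.max continuous_const).tendsto 0
    simpa using this.mono_left nhdsWithin_le_nhds⟩

/-- A modulus for `x ↦ ∑ₖ pₖ(x) uᵏ`, `|u| ≤ 1`, built from moduli `ρₖ` of the `pₖ` and a bound `M`
on the first moments: the infimum over the truncation level `n + 1` of the sum of the moduli below
that level and the bound `2 M / (n + 1)` on the tails. -/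
def pgfMod (ρ : ℕ → ℝ → ℝ) (M : ℝ) (h : ℝ) : ℝ :=
  ⨅ n : ℕ, ((∑ k ∈ Finset.range (n + 1), ρ k h) + 2 * M / (n + 1 : ℝ))

theorem pgfMod_term_nonneg {ρ : ℕ → ℝ → ℝ} (hρ : ∀ k, IsModulus (ρ k)) {M : ℝ} (hM : 0 < M)
    (h : ℝ) (n : ℕ) :
    0 ≤ (∑ k ∈ Finset.range (n + 1), ρ k h) + 2 * M / (n + 1 : ℝ) := by
  have := Finset.sum_nonneg (s := Finset.range (n + 1)) fun k _ => (hρ k).1 h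
  positivity

theorem pgfMod_bddBelow {ρ : ℕ → ℝ → ℝ} (hρ : ∀ k, IsModulus (ρ k)) {M : ℝ} (hM : 0 < M)
    (h : ℝ) : BddBelow (Set.range fun n : ℕ =>
      (∑ k ∈ Finset.range (n + 1), ρ k h) + 2 * M / (n + 1 : ℝ)) :=
  ⟨0, by rintro _ ⟨n, rfl⟩; exact pgfMod_term_nonneg hρ hM h n⟩

theorem isModulus_pgfMod {ρ : ℕ → ℝ → ℝ} (hρ : ∀ k, IsModulus (ρ k)) {M : ℝ} (hM : 0 < M) :
    IsModulus (pgfMod ρ M) := by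
  have h0 : ∀ s, 0 ≤ pgfMod ρ M s := fun s =>
    le_ciInf fun n => pgfMod_term_nonneg hρ hM s n
  refine ⟨h0, fun s t hst => ?_, ?_⟩
  · refine ciInf_mono (pgfMod_bddBelow hρ hM s) fun n => ?_
    have := Finset.sum_le_sum (s := Finset.range (n + 1)) fun k _ => (hρ k).2.1 hst
    linarith
  · rw [tendsto_order]
    refine ⟨fun a ha => Eventually.of_forall fun s => ha.trans_le (h0 s), fun ε hε => ?_⟩
    obtain ⟨n, hn⟩ := exists_nat_gt (4 * M / ε)
    have hn1 : 2 * M / (n + 1 : ℝ) < ε / 2 := by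
      rw [div_lt_iff₀ hε] at hn
      rw [div_lt_iff₀ (by positivity)]
      nlinarith
    have hlim : Tendsto (fun h => ∑ k ∈ Finset.range (n + 1), ρ k h)
        (nhdsWithin 0 (Set.Ioi 0)) (nhds 0) := by
      simpa using tendsto_finsetSum (Finset.range (n + 1)) fun k _ => (hρ k).2.2
    filter_upwards [hlim.eventually_lt_const (half_pos hε)] with h hh
    refine (ciInf_le (pgfMod_bddBelow hρ hM h) n).trans_lt ?_
    linarith

/-! ### The branching nonlinearity -/

theorem abs_clamp_le (r : ℝ) : |clamp r| ≤ 1 := by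
  unfold clamp
  rw [abs_le]
  exact ⟨le_max_left _ _, max_le (by norm_num) (min_le_left _ _)⟩

theorem abs_clamp_sub_le (r s : ℝ) : |clamp r - clamp s| ≤ |r - s| := by
  unfold clamp
  rw [max_comm (-1), max_comm (-1), min_comm 1, min_comm 1]
  exact (abs_max_sub_max_le_abs _ _ _).trans (by
    simpa using abs_min_sub_min_le_max r 1 s 1)

theorem abs_term_le {q u : ℝ} (hq : 0 ≤ q) (hu : |u| ≤ 1) (k : ℕ) : |q * u ^ k| ≤ q := by
  rw [abs_mul, abs_pow, abs_of_nonneg hq]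
  exact mul_le_of_le_one_right hq (pow_le_one₀ (abs_nonneg _) hu)

theorem summable_term {q : ℕ → ℝ} (hq : ∀ k, 0 ≤ q k) (hs : Summable q) {u : ℝ}
    (hu : |u| ≤ 1) : Summable fun k => q k * u ^ k :=
  Summable.of_norm_bounded hs fun k => abs_term_le (hq k) hu k

theorem abs_pgf_le {q : ℕ → ℝ} (hq : ∀ k, 0 ≤ q k) (hs : HasSum q 1) {u : ℝ}
    (hu : |u| ≤ 1) : |∑' k, q k * u ^ k| ≤ 1 := by
  rw [← Real.norm_eq_abs]
  exact tsum_of_norm_bounded hs fun k => abs_term_le (hq k) hu k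

/-- A generating function is Lipschitz on `[-1, 1]`, with constant the mean of its law. -/
theorem abs_pgf_sub_le {q : ℕ → ℝ} (hq : ∀ k, 0 ≤ q k) (hs : HasSum q 1) {S : ℝ}
    (hS : HasSum (fun k : ℕ => (k : ℝ) * q k) S) {u v : ℝ} (hu : |u| ≤ 1) (hv : |v| ≤ 1) :
    |(∑' k, q k * u ^ k) - ∑' k, q k * v ^ k| ≤ S * |u - v| := by
  rw [← (summable_term hq hs.summable hu).tsum_sub (summable_term hq hs.summable hv)]
  rw [← Real.norm_eq_abs]
  refine tsum_of_norm_bounded (hS.mul_right |u - v|) fun k => ?_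
  rw [Real.norm_eq_abs, ← mul_sub, abs_mul, abs_of_nonneg (hq k)]
  have h1 : |u ^ k - v ^ k| ≤ k * |u - v| := by
    refine (abs_pow_sub_pow_le u v k).trans ?_
    have h2 : max |u| |v| ^ (k - 1) ≤ 1 :=
      pow_le_one₀ ((abs_nonneg u).trans (le_max_left _ _)) (max_le hu hv)
    calc |u - v| * k * max |u| |v| ^ (k - 1) ≤ |u - v| * k * 1 := by gcongr
      _ = k * |u - v| := by ring
  calc q k * |u ^ k - v ^ k| ≤ q k * (k * |u - v|) := mul_le_mul_of_nonneg_left h1 (hq k)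
    _ = k * q k * |u - v| := by ring

theorem abs_pgf_sub_pgf_le {ρ : ℕ → ℝ → ℝ} {M : ℝ}
    {q q' : ℕ → ℝ} (hq : ∀ k, 0 ≤ q k) (hq' : ∀ k, 0 ≤ q' k)
    (hs : HasSum q 1) (hs' : HasSum q' 1) {S S' : ℝ} (hSM : S ≤ M) (hSM' : S' ≤ M)
    (hS : HasSum (fun k : ℕ => (k : ℝ) * q k) S) (hS' : HasSum (fun k : ℕ => (k : ℝ) * q' k) S')
    {h : ℝ} (hqq : ∀ k, |q k - q' k| ≤ ρ k h) {u : ℝ} (hu : |u| ≤ 1) :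
    |(∑' k, q k * u ^ k) - ∑' k, q' k * u ^ k| ≤ pgfMod ρ M h := by
  refine le_ciInf fun n => ?_
  rw [← (summable_term hq hs.summable hu).tsum_sub (summable_term hq' hs'.summable hu)]
  have hn : (0 : ℝ) < n + 1 := by positivity
  have hA : HasSum (fun k => if k ∈ Finset.range (n + 1) then ρ k h else 0)
      (∑ k ∈ Finset.range (n + 1), ρ k h) := by
    have := hasSum_sum_of_ne_finset_zero (s := Finset.range (n + 1))
      (f := fun k => if k ∈ Finset.range (n + 1) then ρ k h else 0) (L := .unconditional ℕ)
      (fun k hk => if_neg hk)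
    rwa [Finset.sum_congr rfl fun k hk => if_pos hk] at this
  have hB := hA.add ((hS.add hS').div_const (n + 1 : ℝ))
  rw [← Real.norm_eq_abs]
  -- Above the truncation level, the weight `k / (n + 1) ≥ 1` dominates the difference.
  refine (tsum_of_norm_bounded hB fun k => ?_).trans ?_
  · rw [Real.norm_eq_abs, ← sub_mul, abs_mul, abs_pow]
    have h1 : |q k - q' k| * |u| ^ k ≤ |q k - q' k| :=
      mul_le_of_le_one_right (abs_nonneg _) (pow_le_one₀ (abs_nonneg _) hu)
    refine h1.trans ?_
    have hk := hq k
    have hk' := hq' k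
    by_cases hkn : k ∈ Finset.range (n + 1)
    · rw [if_pos hkn]
      have : 0 ≤ ((k : ℝ) * q k + k * q' k) / (n + 1) := by positivity
      linarith [hqq k]
    · rw [if_neg hkn, zero_add, le_div_iff₀ hn]
      have hkn' : (n + 1 : ℝ) ≤ k := by
        rw [Finset.mem_range, not_lt] at hkn
        exact_mod_cast hkn
      have h2 : |q k - q' k| ≤ q k + q' k := by
        rw [abs_le]; constructor <;> linarith
      calc |q k - q' k| * (n + 1) ≤ (q k + q' k) * k := by gcongr
        _ = _ := by ring
  · gcongr
    linarith

theorem exp_sub_exp_le {u v W : ℝ} (hu : u ≤ W) (hv : v ≤ W) :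
    |Real.exp u - Real.exp v| ≤ Real.exp W * |u - v| := by
  have key : ∀ {u v : ℝ}, u ≤ W → Real.exp u - Real.exp v ≤ Real.exp W * |u - v| := by
    intro u v hu
    have h1 := Real.add_one_le_exp (v - u)
    have h2 : Real.exp v = Real.exp u * Real.exp (v - u) := by rw [← Real.exp_add]; ring_nf
    calc Real.exp u - Real.exp v ≤ Real.exp u * (u - v) := by
          rw [h2]; nlinarith [Real.exp_pos u]
      _ ≤ Real.exp u * |u - v| := by gcongr; exact le_abs_self _
      _ ≤ _ := by gcongr
  rw [abs_le]
  constructor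
  · have := key (u := v) (v := u) hv
    rw [abs_sub_comm] at this
    linarith
  · exact key hu

section Branching

variable {d : ℕ} {A : Type*} {γbar M : ℝ} {γ : (Fin d → ℝ) → A → ℝ}
  {p : ℕ → (Fin d → ℝ) → A → ℝ}

theorem abs_Gb_le (hγ : ∀ x a, γ x a ∈ Set.Icc (0 : ℝ) γbar)
    (hp01 : ∀ k x a, p k x a ∈ Set.Icc (0 : ℝ) 1) (hpsum : ∀ x a, HasSum (fun k => p k x a) 1)
    (x : Fin d → ℝ) (a : A) (r : ℝ) : |Gb γ p x a r| ≤ γbar * 2 := by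
  unfold Gb
  rw [abs_mul, abs_of_nonneg (hγ x a).1]
  have h1 := abs_pgf_le (fun k => (hp01 k x a).1) (hpsum x a) (abs_clamp_le r)
  have h2 := abs_clamp_le r
  have h3 := abs_sub (∑' k : ℕ, p k x a * (clamp r) ^ k) (clamp r)
  exact mul_le_mul (hγ x a).2 (by linarith) (abs_nonneg _) ((hγ x a).1.trans (hγ x a).2)

theorem Gb_lip (hγ : ∀ x a, γ x a ∈ Set.Icc (0 : ℝ) γbar)
    (hp01 : ∀ k x a, p k x a ∈ Set.Icc (0 : ℝ) 1) (hpsum : ∀ x a, HasSum (fun k => p k x a) 1)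
    (hpmean : ∀ x a, ∃ S, S ≤ M ∧ HasSum (fun k : ℕ => (k : ℝ) * p k x a) S)
    (x : Fin d → ℝ) (a : A) (r r' : ℝ) :
    |Gb γ p x a r - Gb γ p x a r'| ≤ γbar * (M + 1) * |r - r'| := by
  obtain ⟨S, hSM, hS⟩ := hpmean x a
  have hS0 : 0 ≤ S := hS.nonneg fun k => mul_nonneg (Nat.cast_nonneg k) (hp01 k x a).1
  unfold Gb
  rw [← mul_sub, abs_mul, abs_of_nonneg (hγ x a).1, mul_assoc]
  have h1 := abs_pgf_sub_le (fun k => (hp01 k x a).1) (hpsum x a) hS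
    (abs_clamp_le r) (abs_clamp_le r')
  have h2 := abs_clamp_sub_le r r'
  have h3 : S * |clamp r - clamp r'| ≤ M * |r - r'| :=
    mul_le_mul hSM h2 (abs_nonneg _) (hS0.trans hSM)
  refine mul_le_mul (hγ x a).2 ?_ (abs_nonneg _) ((hγ x a).1.trans (hγ x a).2)
  rw [sub_sub_sub_comm]
  refine (abs_sub _ _).trans ?_
  linarith

theorem Gb_space (hγ : ∀ x a, γ x a ∈ Set.Icc (0 : ℝ) γbar)
    (hp01 : ∀ k x a, p k x a ∈ Set.Icc (0 : ℝ) 1) (hpsum : ∀ x a, HasSum (fun k => p k x a) 1)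
    (hpmean : ∀ x a, ∃ S, S ≤ M ∧ HasSum (fun k : ℕ => (k : ℝ) * p k x a) S)
    {ργ : ℝ → ℝ} (hργ : ∀ x y a, |γ x a - γ y a| ≤ ργ ‖x - y‖)
    {ρp : ℕ → ℝ → ℝ} (hρp' : ∀ k x y a, |p k x a - p k y a| ≤ ρp k ‖x - y‖)
    (x y : Fin d → ℝ) (a : A) (r : ℝ) :
    |Gb γ p x a r - Gb γ p y a r| ≤ 2 * ργ ‖x - y‖ + γbar * pgfMod ρp M ‖x - y‖ := by
  obtain ⟨S, hSM, hS⟩ := hpmean x a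
  obtain ⟨S', hSM', hS'⟩ := hpmean y a
  have h1 := abs_pgf_sub_pgf_le (ρ := ρp) (fun k => (hp01 k x a).1) (fun k => (hp01 k y a).1)
    (hpsum x a) (hpsum y a) hSM hSM' hS hS' (fun k => hρp' k x y a) (abs_clamp_le r)
  have h2 := abs_pgf_le (fun k => (hp01 k x a).1) (hpsum x a) (abs_clamp_le r)
  have h3 := abs_clamp_le r
  unfold Gb
  set P := ∑' k : ℕ, p k x a * (clamp r) ^ k
  set Q := ∑' k : ℕ, p k y a * (clamp r) ^ k
  have e : γ x a * (P - clamp r) - γ y a * (Q - clamp r)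
      = (γ x a - γ y a) * (P - clamp r) + γ y a * (P - Q) := by ring
  rw [e]
  refine (abs_add_le _ _).trans ?_
  rw [abs_mul, abs_mul, abs_of_nonneg (hγ y a).1, mul_comm 2]
  have h4 := abs_sub P (clamp r)
  exact add_le_add
    (mul_le_mul (hργ x y a) (by linarith) (abs_nonneg _) ((abs_nonneg _).trans (hργ x y a)))
    (mul_le_mul (hγ y a).2 h1 (abs_nonneg _) ((hγ y a).1.trans (hγ y a).2))

theorem branching_le (hγ : ∀ x a, γ x a ∈ Set.Icc (0 : ℝ) γbar)
    (hp01 : ∀ k x a, p k x a ∈ Set.Icc (0 : ℝ) 1) (hpsum : ∀ x a, HasSum (fun k => p k x a) 1)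
    (hpmean : ∀ x a, ∃ S, S ≤ M ∧ HasSum (fun k : ℕ => (k : ℝ) * p k x a) S)
    {ργ : ℝ → ℝ} (hργ : ∀ x y a, |γ x a - γ y a| ≤ ργ ‖x - y‖)
    {ρp : ℕ → ℝ → ℝ} (hρp' : ∀ k x y a, |p k x a - p k y a| ≤ ρp k ‖x - y‖)
    {T lam : ℝ} (hlam : 0 < lam) {t s : ℝ} (ht : t ∈ Set.Icc 0 T) (hs : s ∈ Set.Icc 0 T)
    (x y : Fin d → ℝ) (a : A) (r : ℝ) :
    Real.exp (lam * t) * Gb γ p x a (Real.exp (-lam * t) * r)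
        - Real.exp (lam * s) * Gb γ p y a (Real.exp (-lam * s) * r)
      ≤ Real.exp (lam * T) * (2 * ργ ‖x - y‖ + γbar * pgfMod ρp M ‖x - y‖)
        + Real.exp (lam * T) * lam * γbar * (2 + (M + 1) * |r|) * |t - s| := by
  have htT : lam * t ≤ lam * T := mul_le_mul_of_nonneg_left ht.2 hlam.le
  have hsT : lam * s ≤ lam * T := mul_le_mul_of_nonneg_left hs.2 hlam.le
  have hts : |lam * t - lam * s| = lam * |t - s| := by
    rw [← mul_sub, abs_mul, abs_of_pos hlam]
  have hst : |-lam * t - -lam * s| = lam * |t - s| := by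
    rw [← mul_sub, abs_mul, abs_neg, abs_of_pos hlam]
  have hγ0 : 0 ≤ γbar := (hγ x a).1.trans (hγ x a).2
  have hM : 0 ≤ M := by
    obtain ⟨S, hSM, hS⟩ := hpmean x a
    exact (hS.nonneg fun k => mul_nonneg (Nat.cast_nonneg k) (hp01 k x a).1).trans hSM
  have e1 := exp_sub_exp_le htT hsT
  have e2 : |Real.exp (-lam * t) - Real.exp (-lam * s)| ≤ lam * |t - s| := by
    have := exp_sub_exp_le (u := -lam * t) (v := -lam * s) (W := 0)
      (by nlinarith [ht.1]) (by nlinarith [hs.1])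
    rwa [Real.exp_zero, one_mul, hst] at this
  rw [hts] at e1
  have g1 := Gb_space hγ hp01 hpsum hpmean hργ hρp' x y a (Real.exp (-lam * t) * r)
  have g2 := abs_Gb_le hγ hp01 hpsum y a (Real.exp (-lam * t) * r)
  have g3 := Gb_lip hγ hp01 hpsum hpmean y a (Real.exp (-lam * t) * r) (Real.exp (-lam * s) * r)
  rw [← sub_mul, abs_mul] at g3
  have hEt := Real.exp_le_exp.2 htT
  have hEs := Real.exp_le_exp.2 hsT
  set Et := Real.exp (lam * t)
  set Es := Real.exp (lam * s)
  set E := Real.exp (lam * T)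
  have hEt0 : 0 ≤ Et := (Real.exp_pos _).le
  have hEs0 : 0 ≤ Es := (Real.exp_pos _).le
  have hE0 : 0 ≤ E := (Real.exp_pos _).le
  set Gx := Gb γ p x a (Real.exp (-lam * t) * r)
  set Gy := Gb γ p y a (Real.exp (-lam * t) * r)
  set Gs := Gb γ p y a (Real.exp (-lam * s) * r)
  have i1 : Et * (Gx - Gy) ≤ E * (2 * ργ ‖x - y‖ + γbar * pgfMod ρp M ‖x - y‖) := by
    refine (mul_le_mul_of_nonneg_left (le_abs_self _) hEt0).trans ?_
    exact mul_le_mul hEt g1 (abs_nonneg _) hE0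
  have i2 : (Et - Es) * Gy ≤ E * (lam * |t - s|) * (γbar * 2) := by
    refine (le_abs_self _).trans ?_
    rw [abs_mul]
    exact mul_le_mul e1 g2 (abs_nonneg _) (by positivity)
  have i3 : Es * (Gy - Gs) ≤ E * (γbar * (M + 1) * (lam * |t - s| * |r|)) := by
    refine (mul_le_mul_of_nonneg_left (le_abs_self _) hEs0).trans ?_
    refine mul_le_mul hEs (g3.trans ?_) (abs_nonneg _) hE0
    gcongr
  have e : Et * Gx - Es * Gs = Et * (Gx - Gy) + (Et - Es) * Gy + Es * (Gy - Gs) := by ring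
  rw [e]
  linarith

end Branching

/-! ### Drift and diffusion -/

theorem drift_le {d : ℕ} {δ K : ℝ} (hδ : 0 < δ) {u v x y : Fin d → ℝ}
    (h : ‖u - v‖ ≤ K * ‖x - y‖) :
    dotp u (fun i => (x i - y i) / δ) - dotp v (fun i => (x i - y i) / δ)
      ≤ d * K * (‖x - y‖ ^ 2 / δ) := by
  unfold dotp
  rw [← Finset.sum_sub_distrib]
  have : ∀ i ∈ Finset.univ, u i * ((x i - y i) / δ) - v i * ((x i - y i) / δ)
      ≤ K * (‖x - y‖ ^ 2 / δ) := by
    intro i _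
    have h1 : |u i - v i| ≤ K * ‖x - y‖ := (norm_le_pi_norm (u - v) i).trans h
    have h2 : |x i - y i| ≤ ‖x - y‖ := norm_le_pi_norm (x - y) i
    rw [← sub_mul, ← mul_div_assoc, ← mul_div_assoc]
    refine div_le_div_of_nonneg_right ?_ hδ.le
    calc (u i - v i) * (x i - y i) ≤ |u i - v i| * |x i - y i| := by
          rw [← abs_mul]; exact le_abs_self _
      _ ≤ K * ‖x - y‖ * ‖x - y‖ :=
          mul_le_mul h1 h2 (abs_nonneg _) ((abs_nonneg _).trans h1)
      _ = K * ‖x - y‖ ^ 2 := by ring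
  refine (Finset.sum_le_sum this).trans_eq ?_
  simp [mul_assoc]

/-- `tr(σσᵀN)` is the sum of the values of the quadratic form `N` on the columns of `σ`. -/
theorem trace_eq {d m : ℕ} (S : Fin d → Fin m → ℝ) (N : Fin d → Fin d → ℝ)
    (hN : ∀ i j, N i j = N j i) :
    ∑ i, ∑ j, (∑ l, S i l * S j l) * N j i = ∑ l, ∑ i, ∑ j, N i j * S i l * S j l := by
  rw [Finset.sum_comm (s := (Finset.univ : Finset (Fin m)))]
  refine Finset.sum_congr rfl fun i _ => ?_
  rw [Finset.sum_comm (s := (Finset.univ : Finset (Fin m)))]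
  refine Finset.sum_congr rfl fun j _ => ?_
  rw [Finset.sum_mul, hN j i]
  exact Finset.sum_congr rfl fun l _ => by ring

theorem trace_le {d m : ℕ} {δ L : ℝ} (hδ : 0 < δ) {S S' : Fin d → Fin m → ℝ}
    (h : ‖S - S'‖ ≤ L) {X Y : Fin d → Fin d → ℝ}
    (hX : ∀ i j, X i j = X j i) (hY : ∀ i j, Y i j = Y j i)
    (hXY : ∀ ξ η : Fin d → ℝ,
      (∑ i, ∑ j, X i j * ξ i * ξ j) - (∑ i, ∑ j, Y i j * η i * η j)
        ≤ (3 / δ) * ∑ i, (ξ i - η i) ^ 2) :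
    (∑ i, ∑ j, (∑ l, S i l * S j l) * X j i) - (∑ i, ∑ j, (∑ l, S' i l * S' j l) * Y j i)
      ≤ 3 * d * m * (L ^ 2 / δ) := by
  rw [trace_eq S X hX, trace_eq S' Y hY, ← Finset.sum_sub_distrib]
  have : ∀ l ∈ Finset.univ, (∑ i, ∑ j, X i j * S i l * S j l)
      - (∑ i, ∑ j, Y i j * S' i l * S' j l) ≤ (3 / δ) * (d * L ^ 2) := by
    intro l _
    refine (hXY (fun i => S i l) (fun i => S' i l)).trans ?_
    refine mul_le_mul_of_nonneg_left ?_ (by positivity)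
    have h1 : ∀ i ∈ Finset.univ, (S i l - S' i l) ^ 2 ≤ L ^ 2 := by
      intro i _
      have h2 : |S i l - S' i l| ≤ L :=
        ((norm_le_pi_norm ((S - S') i) l).trans (norm_le_pi_norm (S - S') i)).trans h
      rw [← sq_abs]
      exact pow_le_pow_left₀ (abs_nonneg _) h2 2
    refine (Finset.sum_le_sum h1).trans_eq ?_
    simp
  refine (Finset.sum_le_sum this).trans_eq ?_
  simp
  ring

/-! ### The rescaled Hamiltonian as an infimum -/

/-- The expression whose infimum over `a` is `H̃ + λ r`: the rescaling survives only in the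
branching term. -/
def integrand {d m : ℕ} {A : Type*} (b : (Fin d → ℝ) → A → (Fin d → ℝ))
    (σ : (Fin d → ℝ) → A → (Fin d → Fin m → ℝ))
    (γ : (Fin d → ℝ) → A → ℝ) (p : ℕ → (Fin d → ℝ) → A → ℝ)
    (c : (Fin d → ℝ) → A → ℝ) (lam t : ℝ) (x : Fin d → ℝ) (r : ℝ) (q : Fin d → ℝ)
    (N : Fin d → Fin d → ℝ) (a : A) : ℝ :=
  dotp (b x a) q + (1 / 2) * (∑ i, ∑ j, (∑ l, σ x a i l * σ x a j l) * N j i)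
    + Real.exp (lam * t) * Gb γ p x a (Real.exp (-lam * t) * r) - c x a * r

section Infimum

variable {d m : ℕ} {A : Type*} {b : (Fin d → ℝ) → A → (Fin d → ℝ)}
  {σ : (Fin d → ℝ) → A → (Fin d → Fin m → ℝ)} {γ : (Fin d → ℝ) → A → ℝ}
  {p : ℕ → (Fin d → ℝ) → A → ℝ} {c : (Fin d → ℝ) → A → ℝ}

theorem HamT_eq (lam t : ℝ) (x : Fin d → ℝ) (r : ℝ) (q : Fin d → ℝ) (N : Fin d → Fin d → ℝ) :
    HamT b σ γ p c lam t x r q N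
      = -lam * r + ⨅ a, integrand b σ γ p c lam t x r q N a := by
  unfold HamT Ham
  rw [Real.mul_iInf_of_nonneg (Real.exp_pos _).le]
  congr 2
  funext a
  have hE : Real.exp (lam * t) * Real.exp (-lam * t) = 1 := by
    rw [← Real.exp_add]; simp
  have h1 : dotp (b x a) (fun i => Real.exp (-lam * t) * q i)
      = Real.exp (-lam * t) * dotp (b x a) q := by
    unfold dotp
    rw [Finset.mul_sum]
    exact Finset.sum_congr rfl fun i _ => by ring
  have h2 : ∑ i, ∑ j, (∑ l, σ x a i l * σ x a j l) * (Real.exp (-lam * t) * N j i)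
      = Real.exp (-lam * t) * ∑ i, ∑ j, (∑ l, σ x a i l * σ x a j l) * N j i := by
    simp only [Finset.mul_sum (s := (Finset.univ : Finset (Fin d)))]
    exact Finset.sum_congr rfl fun i _ => Finset.sum_congr rfl fun j _ => by ring
  rw [h1, h2]
  unfold integrand
  linear_combination (dotp (b x a) q
    + (1 / 2) * (∑ i, ∑ j, (∑ l, σ x a i l * σ x a j l) * N j i) - c x a * r) * hE

theorem integrand_bddBelow {γbar : ℝ} (hb : ∃ C, ∀ x a, ‖b x a‖ ≤ C)
    (hσ : ∃ C, ∀ x a, ‖σ x a‖ ≤ C) (hγ : ∀ x a, γ x a ∈ Set.Icc (0 : ℝ) γbar)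
    (hp01 : ∀ k x a, p k x a ∈ Set.Icc (0 : ℝ) 1) (hpsum : ∀ x a, HasSum (fun k => p k x a) 1)
    (hc0 : ∀ x a, 0 ≤ c x a) (hc : ∃ C, ∀ x a, c x a ≤ C)
    (lam t : ℝ) (x : Fin d → ℝ) (r : ℝ) (q : Fin d → ℝ) (N : Fin d → Fin d → ℝ) :
    BddBelow (Set.range (integrand b σ γ p c lam t x r q N)) := by
  obtain ⟨Cb, hb⟩ := hb
  obtain ⟨Cσ, hσ⟩ := hσ
  obtain ⟨Cc, hc⟩ := hc
  refine ⟨-(∑ i, Cb * |q i|) + (1 / 2) * (-(∑ i, ∑ j, (∑ _l : Fin m, Cσ * Cσ) * |N j i|))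
    - Real.exp (lam * t) * (γbar * 2) - Cc * |r|, ?_⟩
  rintro _ ⟨a, rfl⟩
  have h1 : |dotp (b x a) q| ≤ ∑ i, Cb * |q i| := by
    refine (Finset.abs_sum_le_sum_abs _ _).trans (Finset.sum_le_sum fun i _ => ?_)
    rw [abs_mul]
    gcongr
    exact (norm_le_pi_norm (b x a) i).trans (hb x a)
  have hS : ∀ i l, |σ x a i l| ≤ Cσ := fun i l =>
    ((norm_le_pi_norm (σ x a i) l).trans (norm_le_pi_norm (σ x a) i)).trans (hσ x a)
  have h2 : |∑ i, ∑ j, (∑ l, σ x a i l * σ x a j l) * N j i|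
      ≤ ∑ i, ∑ j, (∑ _l : Fin m, Cσ * Cσ) * |N j i| := by
    refine (Finset.abs_sum_le_sum_abs _ _).trans (Finset.sum_le_sum fun i _ => ?_)
    refine (Finset.abs_sum_le_sum_abs _ _).trans (Finset.sum_le_sum fun j _ => ?_)
    rw [abs_mul]
    refine mul_le_mul_of_nonneg_right ?_ (abs_nonneg _)
    refine (Finset.abs_sum_le_sum_abs _ _).trans (Finset.sum_le_sum fun l _ => ?_)
    rw [abs_mul]
    exact mul_le_mul (hS i l) (hS j l) (abs_nonneg _) ((abs_nonneg _).trans (hS i l))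
  have h3 := mul_le_mul_of_nonneg_left
    (abs_le.1 (abs_Gb_le hγ hp01 hpsum x a (Real.exp (-lam * t) * r))).1
    (Real.exp_pos (lam * t)).le
  have h4 : c x a * r ≤ Cc * |r| :=
    (mul_le_mul_of_nonneg_left (le_abs_self r) (hc0 x a)).trans
      (mul_le_mul_of_nonneg_right (hc x a) (abs_nonneg r))
  have h1' := (abs_le.1 h1).1
  have h2' := (abs_le.1 h2).1
  unfold integrand
  linarith

end Infimum

/-- Modulus-of-continuity estimate for the rescaled Hamiltonian
at Ishii matrices. -/
theorem rescaled_hamiltonian_ishii_estimate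
    (d m : ℕ) (hd : 0 < d) (hm : 0 < m)
    (A : Type) [Nonempty A]
    (γbar M : ℝ) (hγbar : 0 < γbar) (hM : 0 < M)
    (b : (Fin d → ℝ) → A → (Fin d → ℝ))
    (σ : (Fin d → ℝ) → A → (Fin d → Fin m → ℝ))
    (γ : (Fin d → ℝ) → A → ℝ)
    (p : ℕ → (Fin d → ℝ) → A → ℝ)
    (c : (Fin d → ℝ) → A → ℝ)
    (hb_bdd : ∃ C, ∀ x a, ‖b x a‖ ≤ C)
    (hσ_bdd : ∃ C, ∀ x a, ‖σ x a‖ ≤ C)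
    (hγ : ∀ x a, γ x a ∈ Set.Icc (0 : ℝ) γbar)
    (hp01 : ∀ k x a, p k x a ∈ Set.Icc (0 : ℝ) 1)
    (hpsum : ∀ x a, HasSum (fun k => p k x a) 1)
    (hpmean : ∀ x a, ∃ S, S ≤ M ∧ HasSum (fun k : ℕ => (k : ℝ) * p k x a) S)
    (hc0 : ∀ x a, 0 ≤ c x a) (hc_bdd : ∃ C, ∀ x a, c x a ≤ C)
    (K : ℝ) (hK : 0 < K)
    (hLip : ∀ x y a, ‖b x a - b y a‖ + ‖σ x a - σ y a‖ ≤ K * ‖x - y‖)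
    (hγUC : ∃ ρ, IsModulus ρ ∧ ∀ x y a, |γ x a - γ y a| ≤ ρ ‖x - y‖)
    (hcUC : ∃ ρ, IsModulus ρ ∧ ∀ x y a, |c x a - c y a| ≤ ρ ‖x - y‖)
    (hpUC : ∀ k, ∃ ρ, IsModulus ρ ∧ ∀ x y a, |p k x a - p k y a| ≤ ρ ‖x - y‖)
    (T : ℝ) (hT : 0 < T) (lam : ℝ) (hlam : 0 < lam) :
    ∃ ρ : ℝ → ℝ, IsModulus ρ ∧
      ∀ δ : ℝ, 0 < δ → ∀ t ∈ Set.Icc (0 : ℝ) T, ∀ s ∈ Set.Icc (0 : ℝ) T,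
        ∀ (x y : Fin d → ℝ) (r : ℝ) (X Y : Fin d → Fin d → ℝ),
          (∀ i j, X i j = X j i) → (∀ i j, Y i j = Y j i) →
          (∀ ξ η : Fin d → ℝ,
            (∑ i, ∑ j, X i j * ξ i * ξ j) - (∑ i, ∑ j, Y i j * η i * η j)
              ≤ (3 / δ) * ∑ i, (ξ i - η i) ^ 2) →
          HamT b σ γ p c lam t x r (fun i => (x i - y i) / δ) X
              - HamT b σ γ p c lam s y r (fun i => (x i - y i) / δ) Y
            ≤ ρ (|t - s| + ‖x - y‖ + ‖x - y‖ ^ 2 / δ) * (1 + |r|) := by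
  obtain ⟨ργ, hργ, hργ'⟩ := hγUC
  obtain ⟨ρc, hρc, hρc'⟩ := hcUC
  choose ρp hρp hρp' using hpUC
  have hP := isModulus_pgfMod hρp hM
  set C : ℝ := d * K + 3 / 2 * d * m * K ^ 2
    + Real.exp (lam * T) * lam * γbar * (2 + (M + 1)) with hC
  have hC0 : 0 ≤ C := by positivity
  refine ⟨fun h => C * max h 0
    + (Real.exp (lam * T) * (2 * ργ h + γbar * pgfMod ρp M h) + ρc h),
    (isModulus_posPart.const_mul hC0).add ((((hργ.const_mul zero_le_two).add
      (hP.const_mul hγbar.le)).const_mul (Real.exp_pos _).le).add hρc), ?_⟩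
  intro δ hδ t ht s hs x y r X Y hX hY hXY
  set θ := |t - s| + ‖x - y‖ + ‖x - y‖ ^ 2 / δ with hθ
  have hts0 := abs_nonneg (t - s)
  have hxy0 := norm_nonneg (x - y)
  have hq0 : 0 ≤ ‖x - y‖ ^ 2 / δ := by positivity
  have hθ0 : 0 ≤ θ := by positivity
  have hxyθ : ‖x - y‖ ≤ θ := by linarith
  have htsθ : |t - s| ≤ θ := by linarith
  have hqθ : ‖x - y‖ ^ 2 / δ ≤ θ := by linarith
  have hR0 := abs_nonneg r
  have hE0 := (Real.exp_pos (lam * T)).le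
  rw [HamT_eq, HamT_eq, add_sub_add_left_eq_sub, sub_le_iff_le_add, add_comm, ← sub_le_iff_le_add]
  refine le_ciInf fun a => ?_
  refine sub_le_iff_le_add.2 ((ciInf_le (integrand_bddBelow hb_bdd hσ_bdd hγ hp01 hpsum hc0
    hc_bdd lam t x r _ X) a).trans ?_)
  have k1 : ‖b x a - b y a‖ ≤ K * ‖x - y‖ := by
    linarith [hLip x y a, norm_nonneg (σ x a - σ y a)]
  have k2 : ‖σ x a - σ y a‖ ≤ K * ‖x - y‖ := by
    linarith [hLip x y a, norm_nonneg (b x a - b y a)]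
  have D1 := drift_le hδ k1
  have D2 := trace_le hδ k2 hX hY hXY
  have D3 := branching_le hγ hp01 hpsum hpmean hργ' hρp' hlam ht hs x y a r
  have D4 : c y a * r - c x a * r ≤ ρc θ * |r| := by
    rw [← sub_mul]
    refine (le_abs_self _).trans ?_
    rw [abs_mul, abs_sub_comm]
    exact mul_le_mul_of_nonneg_right ((hρc' x y a).trans (hρc.2.1 hxyθ)) hR0
  have m1 : d * K * (‖x - y‖ ^ 2 / δ) ≤ d * K * θ := by gcongr
  have m2 : (3 : ℝ) * d * m * ((K * ‖x - y‖) ^ 2 / δ) ≤ 3 * d * m * (K ^ 2 * θ) := by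
    rw [mul_pow, mul_div_assoc]; gcongr
  have m3 : Real.exp (lam * T) * (2 * ργ ‖x - y‖ + γbar * pgfMod ρp M ‖x - y‖)
      ≤ Real.exp (lam * T) * (2 * ργ θ + γbar * pgfMod ρp M θ) := by
    have h1 := hργ.2.1 hxyθ
    have h2 := hP.2.1 hxyθ
    gcongr
  have m4 : Real.exp (lam * T) * lam * γbar * (2 + (M + 1) * |r|) * |t - s|
      ≤ Real.exp (lam * T) * lam * γbar * ((2 + (M + 1)) * (1 + |r|)) * θ := by
    gcongr
    nlinarith
  set Q := Real.exp (lam * T) * (2 * ργ θ + γbar * pgfMod ρp M θ) with hQ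
  have hQ0 : 0 ≤ Q := by
    have h1 := hργ.1 θ
    have h2 := hP.1 θ
    positivity
  have n1 : 0 ≤ (d * K * θ) * |r| := by positivity
  have n2 : 0 ≤ (3 * d * m * (K ^ 2 * θ)) * |r| := by positivity
  have n3 : 0 ≤ Q * |r| := by positivity
  have n4 : 0 ≤ ρc θ := hρc.1 θ
  beta_reduce
  rw [max_eq_left hθ0, ← hQ, hC]
  unfold integrand
  linarith

end
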